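/- Let X be an m×n totally positive real matrix, let T = (t_{ab}) be the output of Cauchon's Algorithm applied to X, and let X^{(i,j)} = (x^{(i,j)}_{kℓ}) be the intermediate matrix at stage (i,j) of the algorithm. Then for all k ∈ [m] and ℓ ∈ [n], x^{(i,j)}_{kℓ} equals the sum of the weights w(P) over all paths P from row vertex k to column vertex ℓ (with respect to T) all of whose reversed-L turns (i_{s+1}, j_s) satisfy (i_{s+1}, j_s) ⪰ (i,j) in the reverse lexicographic order, i.e., i_{s+1} < i, or i_{s+1} = i and j_s ≤ j. -/

import Mathlib

/-!
The proof is a downward induction on the time `t` of the algorithm. At the end no reversed-L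
turn is allowed and the only path from `k` to `l` is the hook with the single Γ-turn `(k, l)`,
of weight `t_{kl}`. The step with pivot `(i, j)`, read backwards, is
`x_{kl} = x⁺_{kl} + x⁺_{kj} t_{ij}⁻¹ t_{il}` for `k < i`, `l < j` (and `x_{kl} = x⁺_{kl}`
otherwise), because row `i` is final by the time it becomes the pivot row and column `j` is
untouched by the step (`cauchonSeq_eq_succ_add`). Path sums obey the same recursion
(`pathSum_step`): a path that uses the newly allowed turn `(i, j)` must use it last, so it is a
path from `k` to `j` with turns strictly after `(i, j)`, prolonged by the factor
`t_{ij}⁻¹ t_{il}` (`gammaWeight_insert`).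

No division is ever cancelled, so with the convention `0⁻¹ = 0` the argument needs no positivity
of the pivots.
-/


open Finset

/-- A real matrix is totally positive if every minor (determinant of a square submatrix
obtained by selecting rows and columns in increasing order) is positive. -/
def TotallyPositive {m n : ℕ} (A : Matrix (Fin m) (Fin n) ℝ) : Prop :=
  ∀ (r : ℕ) (f : Fin r → Fin m) (g : Fin r → Fin n),
    StrictMono f → StrictMono g → 0 < (A.submatrix f g).det

/-- A matrix is (strongly) positive if all of its entries are positive. -/
def EntrywisePos {m n : ℕ} (A : Matrix (Fin m) (Fin n) ℝ) : Prop :=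
  ∀ i j, 0 < A i j

/-- The weight of the Γ-path encoded by the pair of finsets `(I, J)`.
A Γ-path with Γ-turns `(i₁,j₁), …, (i_p,j_p)`, where `i₁ < i₂ < ⋯ < i_p` and
`j₁ > j₂ > ⋯ > j_p`, corresponds to the pair `I = {i₁,…,i_p}`, `J = {j₁,…,j_p}`;
the path runs from row vertex `i₁ = min I` to column vertex `j_p = min J`.
Its weight is `t_{i₁j₁} · ∏_{s=1}^{p−1} t_{i_{s+1} j_s}⁻¹ · t_{i_{s+1} j_{s+1}}`. -/
noncomputable def gammaWeight {m n : ℕ} (T : Matrix (Fin m) (Fin n) ℝ)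
    (I : Finset (Fin m)) (J : Finset (Fin n)) : ℝ :=
  if h : I.Nonempty ∧ J.Nonempty ∧ I.card = J.card then
    let p := I.card
    let row : ℕ → Fin m := fun s => (I.sort (· ≤ ·)).getD s (I.min' h.1)
    let col : ℕ → Fin n := fun s => (J.sort (· ≤ ·)).getD (p - 1 - s) (J.min' h.2.1)
    T (row 0) (col 0) *
      ∏ s ∈ Finset.range (p - 1),
        ((T (row (s + 1)) (col s))⁻¹ * T (row (s + 1)) (col (s + 1)))
  else 0

/-- The Γ-path-sum matrix `X_Γ(T)`: its `(i,j)` entry is the sum of the weights of all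
Γ-paths from row vertex `i` to column vertex `j`. -/
noncomputable def XGamma {m n : ℕ} (T : Matrix (Fin m) (Fin n) ℝ) :
    Matrix (Fin m) (Fin n) ℝ :=
  Matrix.of fun i j =>
    ∑ I ∈ Finset.univ.filter (fun I : Finset (Fin m) => I.min = (i : WithTop (Fin m))),
      ∑ J ∈ Finset.univ.filter (fun J : Finset (Fin n) =>
          J.min = (j : WithTop (Fin n)) ∧ J.card = I.card),
        gammaWeight T I J

/-- The weight of the L-path encoded by the pair of finsets `(I, J)`.
An L-path with turns `(i₁,j₁), …, (i_p,j_p)`, where `i₁ > i₂ > ⋯ > i_p` and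
`j₁ < j₂ < ⋯ < j_p`, corresponds to `I = {i₁,…,i_p}`, `J = {j₁,…,j_p}`;
the path runs from row vertex `i₁ = max I` to column vertex `j_p = max J`. -/
noncomputable def lWeight {m n : ℕ} (T : Matrix (Fin m) (Fin n) ℝ)
    (I : Finset (Fin m)) (J : Finset (Fin n)) : ℝ :=
  if h : I.Nonempty ∧ J.Nonempty ∧ I.card = J.card then
    let p := I.card
    let row : ℕ → Fin m := fun s => (I.sort (· ≤ ·)).getD (p - 1 - s) (I.min' h.1)
    let col : ℕ → Fin n := fun s => (J.sort (· ≤ ·)).getD s (J.min' h.2.1)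
    T (row 0) (col 0) *
      ∏ s ∈ Finset.range (p - 1),
        ((T (row (s + 1)) (col s))⁻¹ * T (row (s + 1)) (col (s + 1)))
  else 0

/-- The L-path-sum matrix `X_L(T)`. -/
noncomputable def XL {m n : ℕ} (T : Matrix (Fin m) (Fin n) ℝ) :
    Matrix (Fin m) (Fin n) ℝ :=
  Matrix.of fun i j =>
    ∑ I ∈ Finset.univ.filter (fun I : Finset (Fin m) => I.max = (i : WithBot (Fin m))),
      ∑ J ∈ Finset.univ.filter (fun J : Finset (Fin n) =>
          J.max = (j : WithBot (Fin n)) ∧ J.card = I.card),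
        lWeight T I J

/-- The set of internal vertices traversed by the Γ-path encoded by `(I, J)`:
horizontal segments `{(i_s, b) : j_s ≤ b ≤ j_{s-1}}` (with `j₀` interpreted as the last
column) and vertical segments `{(a, j_s) : i_s ≤ a ≤ i_{s+1}}` (with `i_{p+1}` interpreted
as the last row). -/
def pathVerts {m n : ℕ} (I : Finset (Fin m)) (J : Finset (Fin n)) :
    Finset (Fin m × Fin n) :=
  Finset.univ.filter fun v =>
    (∃ s ∈ Finset.range I.card,
        v.1 = (I.sort (· ≤ ·)).getD s v.1 ∧
        (J.sort (· ≤ ·)).getD (J.card - 1 - s) v.2 ≤ v.2 ∧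
        (s = 0 ∨ v.2 ≤ (J.sort (· ≤ ·)).getD (J.card - s) v.2)) ∨
    (∃ s ∈ Finset.range I.card,
        v.2 = (J.sort (· ≤ ·)).getD (J.card - 1 - s) v.2 ∧
        (I.sort (· ≤ ·)).getD s v.1 ≤ v.1 ∧
        (s + 1 = I.card ∨ v.1 ≤ (I.sort (· ≤ ·)).getD (s + 1) v.1))

/-- The sequence of matrices produced by Cauchon's Algorithm: `cauchonSeq X t` is the
matrix obtained after performing the first `t` steps, the steps being indexed by the
positions `(i,j) ∈ [m]×[n]` (1-based) in increasing reverse lexicographic order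
(`(m,n)` first); the step at 1-based position `(i,j)` is performed on `cauchonSeq X t`
with `t = (m−i)·n + (n−j)`, so that the matrix `X^{(i,j)}` of Cauchon's Algorithm is
`cauchonSeq X ((m−i)·n + (n−j))`. -/
noncomputable def cauchonSeq {m n : ℕ} (X : Matrix (Fin m) (Fin n) ℝ) :
    ℕ → Matrix (Fin m) (Fin n) ℝ
  | 0 => X
  | t + 1 =>
    let Y := cauchonSeq X t
    Matrix.of fun k l =>
      let i0 : Fin m := ⟨m - 1 - t / n,
        lt_of_le_of_lt (Nat.sub_le _ _) (by have := k.isLt; omega)⟩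
      let j0 : Fin n := ⟨n - 1 - t % n,
        lt_of_le_of_lt (Nat.sub_le _ _) (by have := l.isLt; omega)⟩
      if (k : ℕ) < (i0 : ℕ) ∧ (l : ℕ) < (j0 : ℕ) then
        Y k l - Y k j0 * (Y i0 j0)⁻¹ * Y i0 l
      else Y k l

/-- The output `T = X^{(1,1)}` of Cauchon's Algorithm. -/
noncomputable def cauchonOutput {m n : ℕ} (X : Matrix (Fin m) (Fin n) ℝ) :
    Matrix (Fin m) (Fin n) ℝ :=
  cauchonSeq X ((m - 1) * n + (n - 1))

/-- `contigMinorTL A i j` (1-based `i`, `j`) is the minor `det A[{i⋯},{j⋯}]` of the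
largest contiguous submatrix of `A` with top-left corner `(i,j)`, i.e. with rows
`i, …, i+k` and columns `j, …, j+k` where `k = min(M−i, N−j)`; it is `1` (the empty
determinant) if `(i,j)` is out of range. -/
noncomputable def contigMinorTL {M N : ℕ} (A : Matrix (Fin M) (Fin N) ℝ) (i j : ℕ) : ℝ :=
  if h : 1 ≤ i ∧ i ≤ M ∧ 1 ≤ j ∧ j ≤ N then
    (A.submatrix
      (fun s : Fin (min (M - i) (N - j) + 1) =>
        (⟨i - 1 + (s : ℕ), by have := s.isLt; omega⟩ : Fin M))
      (fun s : Fin (min (M - i) (N - j) + 1) =>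
        (⟨j - 1 + (s : ℕ), by have := s.isLt; omega⟩ : Fin N))).det
  else 1

/-- `borderMinorTL A i₀ j₀ i j` (1-based indices, `i₀ < i`, `j₀ < j`) is the minor
`det A[{i₀, i⋯},{j₀, j⋯}]` with rows `{i₀} ∪ {i, …, i+k}` and columns
`{j₀} ∪ {j, …, j+k}` where `k = min(M−i, N−j)`; when the contiguous part is out of range
(`i > M` or `j > N`) it is the single entry `A[{i₀},{j₀}]`, and it is `1` if `(i₀,j₀)`
is out of range. -/
noncomputable def borderMinorTL {M N : ℕ} (A : Matrix (Fin M) (Fin N) ℝ)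
    (i₀ j₀ i j : ℕ) : ℝ :=
  if h : 1 ≤ i₀ ∧ i₀ ≤ M ∧ 1 ≤ j₀ ∧ j₀ ≤ N then
    if h2 : i₀ < i ∧ i ≤ M ∧ j₀ < j ∧ j ≤ N then
      (A.submatrix
        (fun s : Fin (min (M - i) (N - j) + 2) =>
          if (s : ℕ) = 0 then (⟨i₀ - 1, by omega⟩ : Fin M)
          else ⟨i - 1 + ((s : ℕ) - 1), by have := s.isLt; omega⟩)
        (fun s : Fin (min (M - i) (N - j) + 2) =>
          if (s : ℕ) = 0 then (⟨j₀ - 1, by omega⟩ : Fin N)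
          else ⟨j - 1 + ((s : ℕ) - 1), by have := s.isLt; omega⟩)).det
    else A ⟨i₀ - 1, by omega⟩ ⟨j₀ - 1, by omega⟩
  else 1

/-- `borderMinorBR A i j i₀ j₀` (1-based indices, `i < i₀`, `j < j₀`) is the minor
`det A[{⋯i, i₀},{⋯j, j₀}]` with rows `{i−k, …, i} ∪ {i₀}` and columns
`{j−k, …, j} ∪ {j₀}` where `k = min(i−1, j−1)`; when the contiguous part is empty
(`i = 0` or `j = 0`) it is the single entry `A[{i₀},{j₀}]`, and it is `1` if `(i₀,j₀)`
is out of range. -/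
noncomputable def borderMinorBR {M N : ℕ} (A : Matrix (Fin M) (Fin N) ℝ)
    (i j i₀ j₀ : ℕ) : ℝ :=
  if h : 1 ≤ i₀ ∧ i₀ ≤ M ∧ 1 ≤ j₀ ∧ j₀ ≤ N then
    if h2 : 1 ≤ i ∧ i < i₀ ∧ 1 ≤ j ∧ j < j₀ then
      (A.submatrix
        (fun s : Fin (min (i - 1) (j - 1) + 2) =>
          if (s : ℕ) = min (i - 1) (j - 1) + 1 then (⟨i₀ - 1, by omega⟩ : Fin M)
          else ⟨i - 1 - min (i - 1) (j - 1) + (s : ℕ), by have := s.isLt; omega⟩)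
        (fun s : Fin (min (i - 1) (j - 1) + 2) =>
          if (s : ℕ) = min (i - 1) (j - 1) + 1 then (⟨j₀ - 1, by omega⟩ : Fin N)
          else ⟨j - 1 - min (i - 1) (j - 1) + (s : ℕ), by have := s.isLt; omega⟩)).det
    else A ⟨i₀ - 1, by omega⟩ ⟨j₀ - 1, by omega⟩
  else 1
open scoped Classical


/-! ### Encoding of Γ-paths by sorted lists -/

variable {m n : ℕ}

/-- All reversed-L turns `(i_{s+1}, j_s)` of the Γ-path encoded by `(I, J)` satisfy `A`.
The values `d` and `e` are out-of-range defaults and are never read when `J.card = I.card`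
(see `turnsIn_default_irrel`). -/
def TurnsIn (A : Fin m → Fin n → Prop) (d : Fin m) (e : Fin n)
    (I : Finset (Fin m)) (J : Finset (Fin n)) : Prop :=
  ∀ s ∈ Finset.range (I.card - 1),
    A ((I.sort (· ≤ ·)).getD (s + 1) d) ((J.sort (· ≤ ·)).getD (J.card - 1 - s) e)

theorem getD_default_irrel {α : Type*} (L : List α) (s : ℕ) (d d' : α) (h : s < L.length) :
    L.getD s d = L.getD s d' := by
  rw [List.getD_eq_getElem _ _ h, List.getD_eq_getElem _ _ h]

theorem turnsIn_default_irrel (A : Fin m → Fin n → Prop) (d d' : Fin m) (e e' : Fin n)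
    (I : Finset (Fin m)) (J : Finset (Fin n)) (h : J.card = I.card) :
    TurnsIn A d e I J ↔ TurnsIn A d' e' I J := by
  unfold TurnsIn
  refine forall₂_congr fun s hs => ?_
  rw [Finset.mem_range] at hs
  rw [getD_default_irrel _ _ d d' (by rw [Finset.length_sort]; omega),
    getD_default_irrel _ _ e e' (by rw [Finset.length_sort]; omega)]

/-- `gammaWeight` unfolded, with arbitrary out-of-range defaults `d` and `e`. -/
theorem gammaWeight_eq_of_default (T : Matrix (Fin m) (Fin n) ℝ) (d : Fin m) (e : Fin n)
    (I : Finset (Fin m)) (J : Finset (Fin n)) (h : J.card = I.card) (h0 : 0 < I.card) :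
    gammaWeight T I J =
      T ((I.sort (· ≤ ·)).getD 0 d) ((J.sort (· ≤ ·)).getD (I.card - 1) e) *
      ∏ s ∈ Finset.range (I.card - 1),
        ((T ((I.sort (· ≤ ·)).getD (s + 1) d) ((J.sort (· ≤ ·)).getD (I.card - 1 - s) e))⁻¹ *
          T ((I.sort (· ≤ ·)).getD (s + 1) d)
            ((J.sort (· ≤ ·)).getD (I.card - 1 - (s + 1)) e)) := by
  have hI : I.Nonempty := Finset.card_pos.mp h0
  have hJ : J.Nonempty := Finset.card_pos.mp (h ▸ h0)
  unfold gammaWeight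
  rw [dif_pos ⟨hI, hJ, h.symm⟩]
  dsimp only
  rw [getD_default_irrel _ 0 (I.min' hI) d (by rw [Finset.length_sort]; omega),
    getD_default_irrel _ _ (J.min' hJ) e (by rw [Finset.length_sort]; omega)]
  congr 1
  refine Finset.prod_congr rfl fun s hs => ?_
  rw [Finset.mem_range] at hs
  rw [getD_default_irrel _ (s + 1) (I.min' hI) d (by rw [Finset.length_sort]; omega),
    getD_default_irrel _ (I.card - 1 - s) (J.min' hJ) e (by rw [Finset.length_sort]; omega),
    getD_default_irrel _ (I.card - 1 - (s + 1)) (J.min' hJ) e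
      (by rw [Finset.length_sort]; omega)]

theorem sort_insert_max {α : Type*} [LinearOrder α] (I : Finset α) (i : α) (h : ∀ a ∈ I, a < i) :
    (insert i I).sort (· ≤ ·) = I.sort (· ≤ ·) ++ [i] := by
  have hi : i ∉ I := fun hi => lt_irrefl _ (h i hi)
  refine List.Perm.eq_of_pairwise' (Finset.pairwise_sort _ _) ?_ ?_ (r := (· ≤ ·))
  · rw [List.pairwise_append]
    refine ⟨Finset.pairwise_sort _ _, List.pairwise_singleton _ _, ?_⟩
    intro a ha b hb
    rw [Finset.mem_sort] at ha
    rw [List.mem_singleton] at hb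
    exact hb ▸ (h a ha).le
  · rw [List.perm_ext_iff_of_nodup (Finset.sort_nodup _ _)]
    · intro a
      simp [or_comm]
    · rw [List.nodup_append]
      refine ⟨Finset.sort_nodup _ _, List.nodup_singleton _, ?_⟩
      intro a ha b hb
      rw [Finset.mem_sort] at ha
      rw [List.mem_singleton] at hb
      exact hb ▸ (h a ha).ne

theorem sort_insert_min {α : Type*} [LinearOrder α] (J : Finset α) (l : α) (h : ∀ b ∈ J, l < b) :
    (insert l J).sort (· ≤ ·) = l :: J.sort (· ≤ ·) :=
  Finset.sort_insert _ (fun b hb => (h b hb).le) (fun hl => lt_irrefl _ (h l hl))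

theorem getD_zero_sort {α : Type*} [LinearOrder α] (J : Finset α) (j e : α)
    (h : J.min = (j : WithTop α)) : (J.sort (· ≤ ·)).getD 0 e = j := by
  have hj := Finset.mem_of_min h
  have h0 : 0 < (J.sort (· ≤ ·)).length := by
    rw [Finset.length_sort]; exact Finset.card_pos.mpr ⟨j, hj⟩
  rw [List.getD_eq_getElem _ _ h0, Finset.sorted_zero_eq_min' ]
  exact le_antisymm (Finset.min'_le _ _ hj) (Finset.le_min' _ _ _ fun b hb => Finset.min_le_of_eq hb h)

/-! ### Prolonging a path by one turn -/

/-- Prolonging a path that ends in column `j` by the reversed-L turn `(i, j)` and the Γ-turn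
`(i, l)` adds exactly one reversed-L turn, namely `(i, j)`. -/
theorem turnsIn_insert (A : Fin m → Fin n → Prop) (d : Fin m) (e : Fin n)
    (I : Finset (Fin m)) (J : Finset (Fin n)) (hc : J.card = I.card) (i : Fin m) (j l : Fin n)
    (hI : ∀ a ∈ I, a < i) (hl : l < j) (hJ : J.min = (j : WithTop (Fin n))) :
    TurnsIn A d e (insert i I) (insert l J) ↔ TurnsIn A d e I J ∧ A i j := by
  have hJ' : ∀ b ∈ J, l < b := fun b hb => hl.trans_le (Finset.min_le_of_eq hb hJ)
  have hcI : (insert i I).card = I.card + 1 :=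
    Finset.card_insert_of_notMem fun hi => lt_irrefl _ (hI i hi)
  have hcJ : (insert l J).card = J.card + 1 :=
    Finset.card_insert_of_notMem fun hi => lt_irrefl _ (hJ' l hi)
  have h0 : 0 < J.card := Finset.card_pos.mpr ⟨j, Finset.mem_of_min hJ⟩
  obtain ⟨p, hp⟩ : ∃ p, I.card = p + 1 := ⟨I.card - 1, by omega⟩
  unfold TurnsIn
  rw [hcI, hcJ, sort_insert_max I i hI, sort_insert_min J l hJ', hc, hp]
  simp only [Nat.add_sub_cancel]
  rw [Finset.range_add_one, Finset.forall_mem_insert, and_comm]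
  refine and_congr (forall₂_congr fun s hs => ?_) ?_
  · rw [Finset.mem_range] at hs
    rw [List.getD_append _ _ _ _ (by rw [Finset.length_sort]; omega),
      show p + 1 - s = (p - s) + 1 by omega, List.getD_cons_succ]
  · rw [List.getD_append_right _ _ _ _ (by rw [Finset.length_sort]; omega),
      show p + 1 - p = 0 + 1 by omega, List.getD_cons_succ, getD_zero_sort J j e hJ]
    simp [hp]

/-- Prolonging a path that ends in column `j` by the reversed-L turn `(i, j)` and the Γ-turn
`(i, l)` multiplies its weight by `t_{ij}⁻¹ t_{il}`. -/
theorem gammaWeight_insert (T : Matrix (Fin m) (Fin n) ℝ)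
    (I : Finset (Fin m)) (J : Finset (Fin n)) (hc : J.card = I.card) (i : Fin m) (j l : Fin n)
    (hI : ∀ a ∈ I, a < i) (hl : l < j) (hJ : J.min = (j : WithTop (Fin n))) :
    gammaWeight T (insert i I) (insert l J) = gammaWeight T I J * (T i j)⁻¹ * T i l := by
  have hJ' : ∀ b ∈ J, l < b := fun b hb => hl.trans_le (Finset.min_le_of_eq hb hJ)
  have hcI : (insert i I).card = I.card + 1 :=
    Finset.card_insert_of_notMem fun hi => lt_irrefl _ (hI i hi)
  have hcJ : (insert l J).card = J.card + 1 :=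
    Finset.card_insert_of_notMem fun hi => lt_irrefl _ (hJ' l hi)
  have h0 : 0 < J.card := Finset.card_pos.mpr ⟨j, Finset.mem_of_min hJ⟩
  obtain ⟨p, hp⟩ : ∃ p, I.card = p + 1 := ⟨I.card - 1, by omega⟩
  rw [gammaWeight_eq_of_default T i j _ _ (by omega) (by omega),
    gammaWeight_eq_of_default T i j I J hc (by omega),
    hcI, sort_insert_max I i hI, sort_insert_min J l hJ', hp]
  simp only [Nat.add_sub_cancel]
  rw [Finset.prod_range_succ, ← mul_assoc, ← mul_assoc]
  congr 2
  · congr 1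
    · rw [List.getD_append _ _ _ _ (by rw [Finset.length_sort]; omega), List.getD_cons_succ]
    · refine Finset.prod_congr rfl fun s hs => ?_
      rw [Finset.mem_range] at hs
      rw [List.getD_append _ _ _ _ (by rw [Finset.length_sort]; omega),
        show p + 1 - s = (p - s) + 1 by omega, List.getD_cons_succ,
        show p + 1 - (s + 1) = (p - (s + 1)) + 1 by omega, List.getD_cons_succ]
  · rw [List.getD_append_right _ _ _ _ (by rw [Finset.length_sort]; omega),
      show p + 1 - p = 0 + 1 by omega, List.getD_cons_succ, getD_zero_sort J j _ hJ]
    simp [hp]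
  · rw [List.getD_append_right _ _ _ _ (by rw [Finset.length_sort]; omega)]
    simp [hp]
  · rw [Nat.sub_self, List.getD_cons_zero]

/-! ### The recursion for restricted path sums -/

/-- The Γ-paths from row vertex `k` to column vertex `l` all of whose reversed-L turns
satisfy `A`, encoded as pairs `(I, J)` of row and column sets. -/
noncomputable def pathsIn (A : Fin m → Fin n → Prop) (k : Fin m) (l : Fin n) :
    Finset (Finset (Fin m) × Finset (Fin n)) :=
  Finset.univ.filter fun P => P.1.min = (k : WithTop (Fin m)) ∧
    P.2.min = (l : WithTop (Fin n)) ∧ P.2.card = P.1.card ∧ TurnsIn A k l P.1 P.2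

theorem mem_pathsIn {A : Fin m → Fin n → Prop} {k : Fin m} {l : Fin n}
    {P : Finset (Fin m) × Finset (Fin n)} :
    P ∈ pathsIn A k l ↔ P.1.min = (k : WithTop (Fin m)) ∧
    P.2.min = (l : WithTop (Fin n)) ∧ P.2.card = P.1.card ∧ TurnsIn A k l P.1 P.2 := by
  simp [pathsIn]

theorem TurnsIn.mono {A B : Fin m → Fin n → Prop} (h : ∀ a b, A a b → B a b)
    {d : Fin m} {e : Fin n} {I : Finset (Fin m)} {J : Finset (Fin n)}
    (hA : TurnsIn A d e I J) : TurnsIn B d e I J := fun s hs => h _ _ (hA s hs)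

/-- A path with at least two Γ-turns is the prolongation of a shorter one by its last
reversed-L turn `(i, j)`. -/
theorem exists_eq_insert {I : Finset (Fin m)} {J : Finset (Fin n)} {k : Fin m} {l : Fin n}
    (hI : I.min = (k : WithTop (Fin m))) (hJ : J.min = (l : WithTop (Fin n)))
    (hc : J.card = I.card) (h2 : 2 ≤ I.card) :
    ∃ (I' : Finset (Fin m)) (J' : Finset (Fin n)) (i : Fin m) (j : Fin n), I = insert i I' ∧ J = insert l J' ∧ I'.min = (k : WithTop (Fin m)) ∧
      J'.min = (j : WithTop (Fin n)) ∧ J'.card = I'.card ∧ (∀ a ∈ I', a < i) ∧ l < j := by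
  have hkI := Finset.mem_of_min hI
  have hlJ := Finset.mem_of_min hJ
  have hiI := I.max'_mem ⟨k, hkI⟩
  set i := I.max' ⟨k, hkI⟩ with hi
  have hJ'ne : (J.erase l).Nonempty := by
    rw [← Finset.card_pos, Finset.card_erase_of_mem hlJ]; omega
  have hki : k ≠ i := by
    rintro hki
    have : I ⊆ {k} := fun a ha => by
      rw [Finset.mem_singleton]
      exact le_antisymm (hki ▸ I.le_max' a ha) (Finset.min_le_of_eq ha hI)
    have := Finset.card_le_card this
    simp at this
    omega
  refine ⟨I.erase i, J.erase l, i, (J.erase l).min' hJ'ne, (Finset.insert_erase hiI).symm,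
    (Finset.insert_erase hlJ).symm, ?_, (Finset.coe_min' _).symm, ?_, ?_, ?_⟩
  · refine le_antisymm (Finset.min_le (Finset.mem_erase.mpr ⟨hki, hkI⟩)) ?_
    exact hI ▸ Finset.min_mono (Finset.erase_subset _ _)
  · rw [Finset.card_erase_of_mem hiI, Finset.card_erase_of_mem hlJ, hc]
  · intro a ha
    rw [Finset.mem_erase] at ha
    exact lt_of_le_of_ne (I.le_max' a ha.2) ha.1
  · have := (J.erase l).min'_mem hJ'ne
    rw [Finset.mem_erase] at this
    exact lt_of_le_of_ne (Finset.min_le_of_eq this.2 hJ) this.1.symm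

/-- If every allowed turn comes strictly after `(i, j)` in the reverse lexicographic order, then
a path ending in column `j` stays above row `i`: a turn in row `i` would lie in a column left
of `j`, whereas all columns of the path are at least `j`. -/
theorem lt_of_turnsIn {A : Fin m → Fin n → Prop} {I : Finset (Fin m)} {J : Finset (Fin n)}
    {k : Fin m} {j : Fin n} {i : Fin m} (hA : ∀ a b, A a b → a < i ∨ (a = i ∧ b < j))
    (hki : k < i) (hP : (I, J) ∈ pathsIn A k j) : ∀ a ∈ I, a < i := by
  obtain ⟨hI, hJ, hc, hT⟩ := mem_pathsIn.mp hP
  dsimp only at hI hJ hc hT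
  have hkI := Finset.mem_of_min hI
  by_cases h2 : 2 ≤ I.card
  · obtain ⟨I', J', i', j', rfl, rfl, hI', hJ', hc', hlt, hjj⟩ := exists_eq_insert hI hJ hc h2
    rw [turnsIn_insert A k j I' J' hc' i' j' j hlt hjj hJ'] at hT
    have hi' : i' < i := by
      rcases hA _ _ hT.2 with h | ⟨-, h⟩
      · exact h
      · exact absurd hjj h.not_gt
    intro a ha
    rcases Finset.mem_insert.mp ha with rfl | ha
    · exact hi'
    · exact (hlt a ha).trans hi'
  · intro a ha
    have : I.card ≤ 1 := by omega
    rw [Finset.card_le_one.mp this a ha k hkI]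
    exact hki

/-- Recursion for the path sums when `(i, j)`, preceding all turns in `A`, is allowed as well.
A path that uses `(i, j)` uses it as its last reversed-L turn, since later turns lie in lower
rows; removing it leaves a path to column `j` with all turns in `A`. -/
theorem pathSum_step (T : Matrix (Fin m) (Fin n) ℝ) {A B : Fin m → Fin n → Prop}
    (i : Fin m) (j : Fin n) (hA : ∀ a b, A a b → a < i ∨ (a = i ∧ b < j))
    (hB : ∀ a b, B a b ↔ A a b ∨ (a = i ∧ b = j)) (k : Fin m) (l : Fin n) :
    ∑ P ∈ pathsIn B k l, gammaWeight T P.1 P.2 =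
      ∑ P ∈ pathsIn A k l, gammaWeight T P.1 P.2 +
      if k < i ∧ l < j then
        (∑ P ∈ pathsIn A k j, gammaWeight T P.1 P.2) * (T i j)⁻¹ * T i l else 0 := by
  have hAB : ∀ a b, A a b → B a b := fun a b h => (hB a b).mpr (Or.inl h)
  have hnA : ¬ A i j := fun h => by
    rcases hA _ _ h with h | ⟨-, h⟩ <;> exact lt_irrefl _ h
  have hsub : pathsIn A k l ⊆ pathsIn B k l := fun P hP => by
    rw [mem_pathsIn] at hP ⊢
    exact ⟨hP.1, hP.2.1, hP.2.2.1, hP.2.2.2.mono hAB⟩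
  have hnew : ∀ P ∈ pathsIn B k l \ pathsIn A k l, k < i ∧ l < j ∧
      ∃ I' J', (I', J') ∈ pathsIn A k j ∧ P = (insert i I', insert l J') := by
    rintro ⟨I, J⟩ hP
    rw [Finset.mem_sdiff, mem_pathsIn, mem_pathsIn] at hP
    dsimp only at hP
    obtain ⟨⟨hI, hJ, hc, hTB⟩, hTA⟩ := hP
    replace hTA : ¬ TurnsIn A k l I J := fun h => hTA ⟨hI, hJ, hc, h⟩
    have h2 : 2 ≤ I.card := by
      by_contra h2
      refine hTA fun s hs => ?_
      rw [Finset.mem_range] at hs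
      omega
    obtain ⟨I', J', i', j', rfl, rfl, hI', hJ', hc', hlt, hlj⟩ := exists_eq_insert hI hJ hc h2
    rw [turnsIn_insert _ k l I' J' hc' i' j' l hlt hlj hJ'] at hTA hTB
    have hi'i : i' ≤ i := by
      rcases (hB _ _).mp hTB.2 with h | h
      · rcases hA _ _ h with h | h
        · exact h.le
        · exact h.1.le
      · exact h.1.le
    have hTA' : TurnsIn A k l I' J' := by
      intro s hs
      refine ((hB _ _).mp (hTB.1 s hs)).resolve_right fun h => ?_
      rw [Finset.mem_range] at hs
      have hmem : (I'.sort (· ≤ ·)).getD (s + 1) k ∈ I' := by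
        rw [List.getD_eq_getElem _ _ (by rw [Finset.length_sort]; omega),
          ← Finset.mem_sort (· ≤ ·)]
        exact List.getElem_mem _
      exact absurd (hlt _ hmem) (by rw [h.1]; exact hi'i.not_gt)
    obtain ⟨rfl, rfl⟩ := ((hB _ _).mp hTB.2).resolve_left fun h => hTA ⟨hTA', h⟩
    refine ⟨hlt k (Finset.mem_of_min hI'), hlj, I', J', mem_pathsIn.mpr ⟨hI', hJ', hc', ?_⟩, rfl⟩
    exact (turnsIn_default_irrel A k k l j' I' J' hc').mp hTA'
  rw [← Finset.sum_sdiff hsub, add_comm]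
  congr 1
  split_ifs with h
  · obtain ⟨hki, hlj⟩ := h
    rw [Finset.sum_mul, Finset.sum_mul]
    symm
    have hmin : ∀ P ∈ pathsIn A k j, (∀ a ∈ P.1, a < i) ∧ (∀ b ∈ P.2, l < b) := fun P hP =>
      ⟨lt_of_turnsIn hA hki hP, fun b hb =>
        hlj.trans_le (Finset.min_le_of_eq hb (mem_pathsIn.mp hP).2.1)⟩
    refine Finset.sum_bij (fun P _ => (insert i P.1, insert l P.2)) ?_ ?_ ?_ ?_
    · intro P hP
      obtain ⟨hI, hJ⟩ := hmin P hP
      obtain ⟨hI', hJ', hc, hT⟩ := mem_pathsIn.mp hP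
      rw [turnsIn_default_irrel A k k j l _ _ hc] at hT
      rw [Finset.mem_sdiff, mem_pathsIn, mem_pathsIn]
      dsimp only
      rw [turnsIn_insert A k l _ _ hc i j l hI hlj hJ',
        turnsIn_insert B k l _ _ hc i j l hI hlj hJ']
      refine ⟨⟨?_, ?_, ?_, hT.mono hAB, (hB _ _).mpr (Or.inr ⟨rfl, rfl⟩)⟩,
        fun h => hnA h.2.2.2.2⟩
      · rw [Finset.min_insert, hI']
        exact min_eq_right (WithTop.coe_le_coe.mpr hki.le)
      · rw [Finset.min_insert, hJ']
        exact min_eq_left (WithTop.coe_le_coe.mpr hlj.le)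
      · rw [Finset.card_insert_of_notMem fun h => lt_irrefl _ (hI _ h),
          Finset.card_insert_of_notMem fun h => lt_irrefl _ (hJ _ h), hc]
    · intro P hP Q hQ h
      obtain ⟨hPI, hPJ⟩ := hmin P hP
      obtain ⟨hQI, hQJ⟩ := hmin Q hQ
      rw [Prod.mk.injEq] at h
      refine Prod.ext ?_ ?_
      · rw [← Finset.erase_insert fun h => lt_irrefl _ (hPI _ h), h.1,
          Finset.erase_insert fun h => lt_irrefl _ (hQI _ h)]
      · rw [← Finset.erase_insert fun h => lt_irrefl _ (hPJ _ h), h.2,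
          Finset.erase_insert fun h => lt_irrefl _ (hQJ _ h)]
    · intro P hP
      obtain ⟨-, -, I', J', hm, rfl⟩ := hnew P hP
      exact ⟨(I', J'), hm, rfl⟩
    · intro P hP
      obtain ⟨hI', hJ', hc, hT⟩ := mem_pathsIn.mp hP
      exact (gammaWeight_insert T _ _ hc i j l (hmin P hP).1 hlj hJ').symm
  · refine Finset.sum_eq_zero fun P hP => ?_
    obtain ⟨h1, h2, -⟩ := hnew P hP
    exact absurd ⟨h1, h2⟩ h

theorem pathSum_empty (T : Matrix (Fin m) (Fin n) ℝ) {A : Fin m → Fin n → Prop}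
    (hA : ∀ a b, ¬ A a b) (k : Fin m) (l : Fin n) :
    ∑ P ∈ pathsIn A k l, gammaWeight T P.1 P.2 = T k l := by
  have : pathsIn A k l = {({k}, {l})} := by
    ext ⟨I, J⟩
    rw [mem_pathsIn, Finset.mem_singleton, Prod.mk.injEq]
    constructor
    · rintro ⟨hI, hJ, hc, hT⟩
      dsimp only at hI hJ hc hT
      have h1 : I.card ≤ 1 := by
        by_contra h1
        exact hA _ _ (hT 0 (Finset.mem_range.mpr (by omega)))
      exact ⟨Finset.eq_singleton_iff_unique_mem.mpr ⟨Finset.mem_of_min hI, fun a ha =>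
          Finset.card_le_one.mp h1 _ ha _ (Finset.mem_of_min hI)⟩,
        Finset.eq_singleton_iff_unique_mem.mpr ⟨Finset.mem_of_min hJ, fun a ha =>
          Finset.card_le_one.mp (hc ▸ h1) _ ha _ (Finset.mem_of_min hJ)⟩⟩
    · rintro ⟨rfl, rfl⟩
      exact ⟨rfl, rfl, rfl, fun s hs => by simp at hs⟩
  rw [this, Finset.sum_singleton, gammaWeight_eq_of_default T k l {k} {l} rfl (by simp)]
  simp

/-! ### Cauchon's Algorithm read backwards -/

/-- A row is not changed once the pivot has reached it. -/
theorem cauchonSeq_row_stable (X : Matrix (Fin m) (Fin n) ℝ) {t u : ℕ} (htu : t ≤ u)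
    (i : Fin m) (hi : m - 1 - t / n ≤ (i : ℕ)) (l : Fin n) :
    cauchonSeq X u i l = cauchonSeq X t i l := by
  induction u, htu using Nat.le_induction with
  | base => rfl
  | succ u hu ih =>
    rw [← ih, cauchonSeq]
    simp only [Matrix.of_apply]
    rw [if_neg]
    rintro ⟨h, -⟩
    have := Nat.div_le_div_right (c := n) hu
    omega

/-- Cauchon's step read backwards. Column `j` is unchanged by the step with pivot `(i, j)`, and
row `i` already agrees with the final output. -/
theorem cauchonSeq_eq_succ_add (X : Matrix (Fin m) (Fin n) ℝ) (t : ℕ) (i : Fin m) (j : Fin n)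
    (hi : (i : ℕ) = m - 1 - t / n) (hj : (j : ℕ) = n - 1 - t % n)
    (ht : t ≤ (m - 1) * n + (n - 1)) (k : Fin m) (l : Fin n) :
    cauchonSeq X t k l = cauchonSeq X (t + 1) k l +
      if k < i ∧ l < j then cauchonSeq X (t + 1) k j * (cauchonOutput X i j)⁻¹ *
        cauchonOutput X i l else 0 := by
  have hrow : ∀ b, cauchonOutput X i b = cauchonSeq X t i b := fun b =>
    cauchonSeq_row_stable X ht i hi.ge b
  have hi' : ∀ h, (⟨m - 1 - t / n, h⟩ : Fin m) = i := fun h => Fin.ext hi.symm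
  have hj' : ∀ h, (⟨n - 1 - t % n, h⟩ : Fin n) = j := fun h => Fin.ext hj.symm
  have hstep : ∀ a b, cauchonSeq X (t + 1) a b = if a < i ∧ b < j then
      cauchonSeq X t a b - cauchonSeq X t a j * (cauchonSeq X t i j)⁻¹ * cauchonSeq X t i b
      else cauchonSeq X t a b := by
    intro a b
    rw [cauchonSeq]
    simp only [Matrix.of_apply, hi', hj', Fin.lt_def, hi, hj]
  have hcol : cauchonSeq X (t + 1) k j = cauchonSeq X t k j := by
    rw [hstep, if_neg fun h => lt_irrefl _ h.2]
  rw [hcol, hrow, hrow, hstep]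
  split_ifs <;> ring

/-- The time at which a position becomes the pivot is monotone for the reverse lexicographic
order. -/
theorem code_le_iff (i a : Fin m) (j b : Fin n) :
    (m - 1 - (i : ℕ)) * n + (n - 1 - (j : ℕ)) ≤ (m - 1 - (a : ℕ)) * n + (n - 1 - (b : ℕ)) ↔
      a < i ∨ (a = i ∧ b ≤ j) := by
  have hi := i.isLt
  have ha := a.isLt
  have hj := j.isLt
  have hb := b.isLt
  rcases lt_trichotomy a i with h | rfl | h
  · simp only [h, true_or, iff_true]
    have h' := Nat.mul_le_mul_right n (show m - 1 - (i : ℕ) + 1 ≤ m - 1 - (a : ℕ) by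
      rw [Fin.lt_def] at h; omega)
    rw [Nat.add_one_mul] at h'
    omega
  · simp only [lt_irrefl, true_and, false_or, Fin.le_def]
    omega
  · simp only [h.not_gt, h.ne', false_and, or_false, iff_false, not_le]
    have h' := Nat.mul_le_mul_right n (show m - 1 - (a : ℕ) + 1 ≤ m - 1 - (i : ℕ) by
      rw [Fin.lt_def] at h; omega)
    rw [Nat.add_one_mul] at h'
    omega

/-- The path-sum formula at every time `t`: a turn is allowed when its pivot time is at least `t`.
The range of `t` includes one step beyond the output, where no turn is allowed. -/
theorem cauchonSeq_eq_pathSum (X : Matrix (Fin m) (Fin n) ℝ) (t : ℕ)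
    (ht : t ≤ (m - 1) * n + (n - 1) + 1) (k : Fin m) (l : Fin n) :
    cauchonSeq X t k l = ∑ P ∈ pathsIn (fun (a : Fin m) (b : Fin n) =>
      t ≤ (m - 1 - (a : ℕ)) * n + (n - 1 - (b : ℕ))) k l,
        gammaWeight (cauchonOutput X) P.1 P.2 := by
  have hm : 0 < m := k.pos
  have hn : 0 < n := l.pos
  have hdiv : ∀ {q r t : ℕ}, r < n → q * n + r = t → t / n = q ∧ t % n = r := by
    rintro q r t hr rfl
    rw [Nat.div_mod_unique hn]
    exact ⟨by ring, hr⟩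
  induction ht using Nat.decreasingInduction generalizing k l with
  | self =>
    rw [pathSum_empty]
    · obtain ⟨h1, h2⟩ := hdiv (show n - 1 < n by omega) (rfl : (m - 1) * n + (n - 1) = _)
      -- The step with pivot in the top-left corner changes nothing.
      have := cauchonSeq_eq_succ_add X _ ⟨0, hm⟩ ⟨0, hn⟩ (by rw [h1]; simp) (by rw [h2]; simp)
        le_rfl k l
      rw [if_neg fun h => absurd (Fin.lt_def.mp h.1) (Nat.not_lt_zero _), add_zero] at this
      exact this.symm
    · intro a b h
      have := Nat.mul_le_mul_right n (Nat.sub_le (m - 1) (a : ℕ))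
      omega
  | of_succ t ht ih =>
    have htm : t / n ≤ m - 1 := by
      rw [← Nat.lt_succ_iff, Nat.div_lt_iff_lt_mul hn, Nat.succ_mul]
      omega
    have htn := Nat.mod_lt t hn
    obtain ⟨i, hi⟩ : ∃ i : Fin m, (i : ℕ) = m - 1 - t / n :=
      ⟨⟨m - 1 - t / n, (Nat.sub_le _ _).trans_lt (by omega)⟩, rfl⟩
    obtain ⟨j, hj⟩ : ∃ j : Fin n, (j : ℕ) = n - 1 - t % n :=
      ⟨⟨n - 1 - t % n, (Nat.sub_le _ _).trans_lt (by omega)⟩, rfl⟩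
    have hcode : t = (m - 1 - (i : ℕ)) * n + (n - 1 - (j : ℕ)) := by
      rw [hi, hj, Nat.sub_sub_self htm, Nat.sub_sub_self (by omega), Nat.div_add_mod']
    have hlt : ∀ (a : Fin m) (b : Fin n),
        t + 1 ≤ (m - 1 - (a : ℕ)) * n + (n - 1 - (b : ℕ)) ↔ a < i ∨ (a = i ∧ b < j) := by
      intro a b
      rw [Nat.succ_le_iff, ← not_le, hcode, code_le_iff]
      grind
    have hB : ∀ (a : Fin m) (b : Fin n), t ≤ (m - 1 - (a : ℕ)) * n + (n - 1 - (b : ℕ)) ↔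
        t + 1 ≤ (m - 1 - (a : ℕ)) * n + (n - 1 - (b : ℕ)) ∨ (a = i ∧ b = j) := by
      intro a b
      rw [hlt, hcode, code_le_iff]
      grind
    rw [pathSum_step (cauchonOutput X) i j (fun a b h => (hlt a b).mp h) hB,
      cauchonSeq_eq_succ_add X t i j hi hj (by omega), ih, ih]

/-- the `(k,ℓ)` entry of the intermediate matrix `X^{(i,j)}` of Cauchon's
Algorithm equals the sum of the weights (with respect to the output `T`) of all Γ-paths
from row vertex `k` to column vertex `ℓ` all of whose reversed-L turns `(i_{s+1}, j_s)`
satisfy `i_{s+1} < i`, or `i_{s+1} = i` and `j_s ≤ j`. -/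
theorem cauchon_intermediate_eq_restricted_path_sum {m n : ℕ}
    (X : Matrix (Fin m) (Fin n) ℝ) (hX : TotallyPositive X)
    (i : Fin m) (j : Fin n) (k : Fin m) (l : Fin n) :
    cauchonSeq X ((m - 1 - (i : ℕ)) * n + (n - 1 - (j : ℕ))) k l =
      ∑ I ∈ Finset.univ.filter (fun I : Finset (Fin m) => I.min = (k : WithTop (Fin m))),
        ∑ J ∈ Finset.univ.filter (fun J : Finset (Fin n) =>
            J.min = (l : WithTop (Fin n)) ∧ J.card = I.card ∧
            ∀ s ∈ Finset.range (I.card - 1),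
              ((I.sort (· ≤ ·)).getD (s + 1) k < i ∨
                ((I.sort (· ≤ ·)).getD (s + 1) k = i ∧
                  (J.sort (· ≤ ·)).getD (J.card - 1 - s) l ≤ j))),
          gammaWeight (cauchonOutput X) I J := by
  have hm := i.isLt
  have hn := j.isLt
  have ht : (m - 1 - (i : ℕ)) * n + (n - 1 - (j : ℕ)) ≤ (m - 1) * n + (n - 1) + 1 := by
    have := Nat.mul_le_mul_right n (Nat.sub_le (m - 1) (i : ℕ))
    omega
  rw [cauchonSeq_eq_pathSum X _ ht]
  simp only [code_le_iff, pathsIn, TurnsIn]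
  rw [Finset.sum_filter, Finset.sum_filter, Fintype.sum_prod_type]
  refine Finset.sum_congr rfl fun I _ => ?_
  by_cases hI : I.min = (k : WithTop (Fin m))
  · rw [if_pos hI, Finset.sum_filter]
    refine Finset.sum_congr rfl fun J _ => ?_
    simp only [hI, true_and]
    congr
  · rw [if_neg hI]
    simp only [hI, false_and, if_false, Finset.sum_const_zero]
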